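/- For every \xi > 0 and every bounded set S \subseteq \mathbb{R}^{n\times m} \times \mathbb{R}^m there exists \alpha > 0 such that for every z \in \mathcal{Z} \cap S and every saddle point z^\star \in \mathcal{Z}^\star, the smoothed duality gap satisfies G_\xi(z; z^\star) \ge \alpha \cdot \mathrm{dist}(z, \mathcal{Z}^\star)^2. -/

import Mathlib

/-!
Fix a saddle point `z⋆ = (x⋆, p⋆)` and let `z = (x, p)`. Since `ℒ(x⋆, ·)` is affine, every good
clears at `x⋆`; since `-log` is strictly convex, all saddle points have the same utilities; and by
complementary slackness they have the same prices. Hence `𝒵⋆` is the product of the polyhedron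
`{x ≥ 0 : utility x = utility x⋆, demand x = 1}` and the point `p⋆`, and Hoffman's error bound
estimates `dist(z, 𝒵⋆)²` by a multiple of
`‖utility x - utility x⋆‖² + ‖demand x - 1‖² + ‖p - p⋆‖²`.

The smoothed gap separates into a supremum over prices `p̂` and one over allocations `x̂`, and each
term is recovered from one source, with constants that are uniform on bounded sets:
* the utility term from `ℒ(x, p⋆) - ℒ(x⋆, p⋆)`, which dominates the Bregman divergence of `-log`;
* the demand term from `p̂ = p⋆ + (demand x - 1) / ξ`;
* the price term from `x̂ᵢⱼ = (1 + ε (p⋆ⱼ - pⱼ)) x⋆ᵢⱼ` with `ε` small: the first-order change of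
  `ℒ(·, p)` is `-ε ‖p - p⋆‖²`, and all other contributions are of order `ε² ‖p - p⋆‖²`.
-/

open BigOperators

noncomputable section

/-- The space of primal-dual pairs `(x, p)` of the Fisher market problem. -/
abbrev FisherPair (n m : ℕ) := (Fin n → Fin m → ℝ) × (Fin m → ℝ)

/-- The primal-dual domain `𝒵 = {(x, p) : x ≥ 0, ∑ⱼ uᵢⱼ xᵢⱼ > 0 for all i}`. -/
def ZSet (n m : ℕ) (u : Fin n → Fin m → ℝ) : Set (FisherPair n m) :=
  {z | (∀ i j, 0 ≤ z.1 i j) ∧ ∀ i, 0 < ∑ j, u i j * z.1 i j}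

/-- The Lagrangian `ℒ(x, p)` of the Fisher market problem. -/
def Lagr (n m : ℕ) (u : Fin n → Fin m → ℝ) (w : Fin n → ℝ)
    (x : Fin n → Fin m → ℝ) (p : Fin m → ℝ) : ℝ :=
  (∑ i, -(w i) * Real.log (∑ j, u i j * x i j)) + ∑ j, p j * ((∑ i, x i j) - 1)

/-- The primal-dual gap function `Q(z, ẑ) = ℒ(x, p̂) - ℒ(x̂, p)`. -/
def Qgap (n m : ℕ) (u : Fin n → Fin m → ℝ) (w : Fin n → ℝ)
    (z zh : FisherPair n m) : ℝ :=
  Lagr n m u w z.1 zh.2 - Lagr n m u w zh.1 z.2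

/-- The squared Euclidean norm of a pair `(x, p)`. -/
def pairNormSq (n m : ℕ) (z : FisherPair n m) : ℝ :=
  (∑ i, ∑ j, (z.1 i j) ^ 2) + ∑ j, (z.2 j) ^ 2

/-- The smoothed duality gap `G_ξ(z; ż) = sup_{ẑ ∈ 𝒵} {Q(z, ẑ) - (ξ/2)‖ẑ - ż‖²}`. -/
def smoothedGap (n m : ℕ) (u : Fin n → Fin m → ℝ) (w : Fin n → ℝ) (ξ : ℝ)
    (z zdot : FisherPair n m) : ℝ :=
  sSup {r : ℝ | ∃ zh ∈ ZSet n m u,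
    r = Qgap n m u w z zh - ξ / 2 * pairNormSq n m (zh - zdot)}

/-- The set `𝒵⋆` of saddle points of the Lagrangian `ℒ`. -/
def ZstarSet (n m : ℕ) (u : Fin n → Fin m → ℝ) (w : Fin n → ℝ) : Set (FisherPair n m) :=
  {zs | zs ∈ ZSet n m u ∧
    (∀ p : Fin m → ℝ, Lagr n m u w zs.1 p ≤ Lagr n m u w zs.1 zs.2) ∧
    (∀ x : Fin n → Fin m → ℝ, (∀ i j, 0 ≤ x i j) → (∀ i, 0 < ∑ j, u i j * x i j) →
      Lagr n m u w zs.1 zs.2 ≤ Lagr n m u w x zs.2)}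

/-- The squared Euclidean distance from a pair to the saddle-point set. -/
def pairDistSq (n m : ℕ) (z : FisherPair n m) (S : Set (FisherPair n m)) : ℝ :=
  sInf {d : ℝ | ∃ z' ∈ S, d = pairNormSq n m (z - z')}

section SupNorm

variable {ι κ : Type*} [Fintype ι] [Fintype κ]

theorem norm_sq_le_sum_sq (x : ι → ℝ) : ‖x‖ ^ 2 ≤ ∑ k, x k ^ 2 := by
  refine (Real.le_sqrt (norm_nonneg x) (by positivity)).1 ?_
  refine (pi_norm_le_iff_of_nonneg (Real.sqrt_nonneg _)).2 fun k => Real.abs_le_sqrt ?_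
  exact Finset.single_le_sum (fun k _ => sq_nonneg (x k)) (Finset.mem_univ k)

theorem sum_sq_le_card_mul_norm_sq (x : ι → ℝ) :
    ∑ k, x k ^ 2 ≤ Fintype.card ι * ‖x‖ ^ 2 := by
  rw [← nsmul_eq_mul]
  exact Finset.sum_le_card_nsmul _ _ _ fun k _ =>
    sq_le_sq' (neg_le_of_abs_le (norm_le_pi_norm x k)) (le_of_abs_le (norm_le_pi_norm x k))

theorem norm_prodMk_sq_le (x : ι → ℝ) (y : κ → ℝ) :
    ‖(x, y)‖ ^ 2 ≤ ∑ k, x k ^ 2 + ∑ k, y k ^ 2 := by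
  rw [Prod.norm_mk]
  rcases max_choice ‖x‖ ‖y‖ with h | h <;> rw [h]
  · exact (norm_sq_le_sum_sq x).trans (le_add_of_nonneg_right (by positivity))
  · exact (norm_sq_le_sum_sq y).trans (le_add_of_nonneg_left (by positivity))

end SupNorm

section ErrorBound

open scoped Topology

variable {ι V E : Type*} [NormedAddCommGroup E] [NormedSpace ℝ E]

theorem exists_norm_le_mul_norm_map_of_isClosed_cone [NormedAddCommGroup V] [NormedSpace ℝ V]
    [ProperSpace V] (M : V →L[ℝ] E) {K : Set V} (hK : IsClosed K)
    (hsmul : ∀ c : ℝ, 0 < c → ∀ h ∈ K, c • h ∈ K) (hker : ∀ h ∈ K, M h = 0 → h = 0) :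
    ∃ C : ℝ, ∀ h ∈ K, ‖h‖ ≤ C * ‖M h‖ := by
  have hcompact : IsCompact (Metric.sphere 0 1 ∩ K) := (isCompact_sphere _ _).inter_right hK
  obtain ⟨c, hc, hle⟩ := hcompact.exists_forall_le' (f := fun h => ‖M h‖) (a := 0) (by fun_prop)
    fun h ⟨hs, hh⟩ => norm_pos_iff.2 fun h0 => by simp [hker h hh h0] at hs
  refine ⟨c⁻¹, fun h hh => ?_⟩
  rcases eq_or_ne h 0 with rfl | h0
  · simp
  have hn : 0 < ‖h‖ := norm_pos_iff.2 h0
  have hunit : c ≤ ‖M (‖h‖⁻¹ • h)‖ :=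
    hle _ ⟨by simp [norm_smul, hn.ne'], hsmul _ (inv_pos.2 hn) h hh⟩
  rw [map_smul, norm_smul, norm_inv, norm_norm, le_inv_mul_iff₀ hn] at hunit
  rwa [le_inv_mul_iff₀ hc, mul_comm]

/-- The face of the nonnegative orthant on which all coordinates outside `s` vanish. -/
def orthantFace (s : Set ι) : Set (ι → ℝ) :=
  {h | 0 ≤ h ∧ ∀ k ∉ s, h k = 0}

theorem isClosed_orthantFace (s : Set ι) : IsClosed (orthantFace s) := by
  simp only [orthantFace, Set.ofPred_and, Set.ofPred_forall]
  exact isClosed_Ici.inter <| isClosed_iInter fun k => isClosed_iInter fun _ =>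
    isClosed_eq (continuous_apply k) continuous_const

theorem smul_mem_orthantFace {s : Set ι} {c : ℝ} (hc : 0 ≤ c) {h : ι → ℝ}
    (hh : h ∈ orthantFace s) : c • h ∈ orthantFace s :=
  ⟨smul_nonneg hc hh.1, fun k hk => by simp [hh.2 k hk]⟩

theorem exists_pos_smul_le_of_mem_orthantFace_support [Finite ι] {e h : ι → ℝ} (he : 0 ≤ e)
    (hh : h ∈ orthantFace (Function.support e)) : ∃ ε : ℝ, 0 < ε ∧ ε • h ≤ e := by
  have hev : ∀ᶠ ε : ℝ in 𝓝[>] 0, ∀ k, ε * h k ≤ e k := by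
    refine Filter.eventually_all.2 fun k => ?_
    by_cases hk : e k = 0
    · simp [hk, hh.2 k (by simpa using hk)]
    · have hlim : Filter.Tendsto (fun ε : ℝ => ε * h k) (𝓝 0) (𝓝 0) :=
        Continuous.tendsto' (by fun_prop) _ _ (zero_mul _)
      exact nhdsWithin_le_nhds ((hlim.eventually_lt_const ((he k).lt_of_ne' hk)).mono
        fun _ => le_of_lt)
  obtain ⟨ε, hle, hε⟩ := (hev.and self_mem_nhdsWithin).exists
  exact ⟨ε, hε, hle⟩

/-- The witness minimizes the coordinate sum over `{e | 0 ≤ e ≤ d, M e = M d}`: subtracting a small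
multiple of a nonzero `h` in its face and in `ker M` would decrease this sum. -/
theorem exists_le_map_eq_ker_inf_orthantFace_support_eq_zero [Finite ι] (M : (ι → ℝ) →ₗ[ℝ] E)
    {d : ι → ℝ} (hd : 0 ≤ d) :
    ∃ e, 0 ≤ e ∧ e ≤ d ∧ M e = M d ∧
      ∀ h ∈ orthantFace (Function.support e), M h = 0 → h = 0 := by
  have := Fintype.ofFinite ι
  have hcompact : IsCompact (Set.Icc 0 d ∩ {e | M e = M d}) :=
    isCompact_Icc.inter_right (isClosed_eq M.continuous_of_finiteDimensional continuous_const)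
  obtain ⟨e, ⟨⟨he0, hed⟩, heM : M e = M d⟩, hmin⟩ :=
    hcompact.exists_isMinOn (f := fun e => ∑ k, e k) ⟨d, ⟨hd, le_rfl⟩, rfl⟩ (by fun_prop)
  refine ⟨e, he0, hed, heM, fun h hh hM => ?_⟩
  obtain ⟨ε, hε, hle⟩ := exists_pos_smul_le_of_mem_orthantFace_support he0 hh
  have hsum : ∑ k, e k ≤ ∑ k, (e - ε • h) k :=
    hmin ⟨⟨sub_nonneg.2 hle, (sub_le_self e (smul_nonneg hε.le hh.1)).trans hed⟩, by simp [hM, heM]⟩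
  have hnonpos : ε * ∑ k, h k ≤ 0 := by
    simpa [Finset.sum_sub_distrib, ← Finset.mul_sum] using hsum
  exact (Fintype.sum_eq_zero_iff_of_nonneg hh.1).1
    ((nonpos_of_mul_nonpos_right hnonpos hε).antisymm (Fintype.sum_nonneg hh.1))

theorem exists_le_map_eq_norm_le [Fintype ι] (M : (ι → ℝ) →ₗ[ℝ] E) :
    ∃ C : ℝ, ∀ d : ι → ℝ, 0 ≤ d →
      ∃ e, 0 ≤ e ∧ e ≤ d ∧ M e = M d ∧ ‖e‖ ≤ C * ‖M d‖ := by
  let K : Set (ι → ℝ) :=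
    ⋃ s ∈ {s | ∀ h ∈ orthantFace s, M h = 0 → h = 0}, orthantFace s
  have hK : IsClosed K :=
    (Set.toFinite _).isClosed_biUnion fun s _ => isClosed_orthantFace s
  obtain ⟨C, hle⟩ := exists_norm_le_mul_norm_map_of_isClosed_cone M.toContinuousLinearMap hK
    (by
      simp only [K, Set.mem_iUnion₂]
      rintro c hc h ⟨s, hs, hh⟩
      exact ⟨s, hs, smul_mem_orthantFace hc.le hh⟩)
    (by
      simp only [K, Set.mem_iUnion₂]
      rintro h ⟨s, hs, hh⟩
      exact hs h hh)
  refine ⟨C, fun d hd => ?_⟩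
  obtain ⟨e, he0, hed, heM, hker⟩ :=
    exists_le_map_eq_ker_inf_orthantFace_support_eq_zero M hd
  have heK : e ∈ K := Set.mem_biUnion hker ⟨he0, fun k hk => by simpa using hk⟩
  exact ⟨e, he0, hed, heM, heM ▸ hle e heK⟩

/-- Hoffman's error bound for the polyhedra `{x | 0 ≤ x, M x = b}`, with `b = M y`. The positive and
negative parts of `y - x` may be decreased separately without leaving the orthant. -/
theorem exists_nonneg_map_eq_norm_sub_le [Fintype ι] (M : (ι → ℝ) →ₗ[ℝ] E) :
    ∃ C : ℝ, ∀ x y : ι → ℝ, 0 ≤ x → 0 ≤ y →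
      ∃ x', 0 ≤ x' ∧ M x' = M y ∧ ‖x' - x‖ ≤ C * ‖M y - M x‖ := by
  obtain ⟨C, hN⟩ := exists_le_map_eq_norm_le
    (M ∘ₗ (LinearMap.funLeft ℝ ℝ Sum.inl - LinearMap.funLeft ℝ ℝ Sum.inr) :
      (ι ⊕ ι → ℝ) →ₗ[ℝ] E)
  refine ⟨C, fun x y hx hy => ?_⟩
  obtain ⟨e, he0, hed, heM, hnorm⟩ := hN (Sum.elim (y - x)⁺ (y - x)⁻)
    (Sum.rec (fun k => posPart_nonneg (y - x) k) fun k => negPart_nonneg (y - x) k)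
  have hdiff : M (e ∘ Sum.inl - e ∘ Sum.inr) = M y - M x := by
    rw [← map_sub, ← posPart_sub_negPart (y - x)]
    exact heM
  refine ⟨x + (e ∘ Sum.inl - e ∘ Sum.inr), fun k => ?_, ?_, ?_⟩
  · have hneg : e (Sum.inr k) ≤ (y k - x k)⁻ := hed (Sum.inr k)
    have hx_ge : (y k - x k)⁻ ≤ x k := by
      rw [negPart_def]
      exact sup_le (by simpa using hy k) (hx k)
    simpa using by linarith [show 0 ≤ e (Sum.inl k) from he0 _]
  · rw [map_add, hdiff, add_sub_cancel]
  · have hNd : (M ∘ₗ (LinearMap.funLeft ℝ ℝ Sum.inl - LinearMap.funLeft ℝ ℝ Sum.inr))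
        (Sum.elim (y - x)⁺ (y - x)⁻) = M y - M x := heM.symm.trans hdiff
    rw [hNd] at hnorm
    refine le_trans ?_ hnorm
    rw [add_sub_cancel_left, pi_norm_le_iff_of_nonneg (norm_nonneg e)]
    have hle : ∀ k, e k ≤ ‖e‖ := fun k => (le_abs_self _).trans (norm_le_pi_norm e k)
    exact fun k => abs_sub_le_of_nonneg_of_le (he0 _) (hle _) (he0 _) (hle _)

end ErrorBound

section LogDefect

/-- The gap in the tangent-line inequality `log t ≤ t - 1`; as a function of the ratio `t = s / r`
it is the Bregman divergence of `-log` from `r` to `s`. -/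
def logDefect (t : ℝ) : ℝ :=
  t - 1 - Real.log t

theorem logDefect_nonneg {t : ℝ} (ht : 0 < t) : 0 ≤ logDefect t :=
  sub_nonneg.2 (Real.log_le_sub_one_of_pos ht)

theorem logDefect_eq_zero_iff {t : ℝ} (ht : 0 < t) : logDefect t = 0 ↔ t = 1 := by
  refine ⟨fun h => ?_, fun h => by simp [logDefect, h]⟩
  by_contra hne
  exact (Real.log_lt_sub_one_of_pos ht hne).ne' (sub_eq_zero.1 h)

theorem logDefect_one_add_le {y : ℝ} (hy : -(1 / 2) ≤ y) : logDefect (1 + y) ≤ 2 * y ^ 2 := by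
  have hpos : 0 < 1 + y := by linarith
  have hlog := Real.one_sub_inv_le_log_of_pos hpos
  have hinv : y - 1 + (1 + y)⁻¹ ≤ 2 * y ^ 2 := by
    have heq : y - 1 + (1 + y)⁻¹ = y ^ 2 / (1 + y) := by field_simp; ring
    rw [heq, div_le_iff₀ hpos]
    nlinarith [mul_nonneg (sq_nonneg y) (by linarith : 0 ≤ 1 + 2 * y)]
  simp only [logDefect]
  linarith

theorem sq_sub_one_div_le_logDefect {t T : ℝ} (ht : 0 < t) (hT : t ≤ T) :
    (t - 1) ^ 2 / (2 * (1 + T)) ≤ logDefect t := by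
  obtain ⟨s, hs, rfl⟩ : ∃ s : ℝ, 0 < s ∧ t = s ^ 2 :=
    ⟨√t, Real.sqrt_pos.2 ht, (Real.sq_sqrt ht.le).symm⟩
  -- Twice `log s ≤ s - 1`.
  have hlog : (s - 1) ^ 2 ≤ logDefect (s ^ 2) := by
    simp only [logDefect, Real.log_pow, Nat.cast_ofNat]
    linarith [Real.log_le_sub_one_of_pos hs]
  have hsq : (s + 1) ^ 2 ≤ 2 * (1 + T) := by linarith [sq_nonneg (s - 1)]
  refine le_trans ?_ hlog
  rw [div_le_iff₀ (by linarith)]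
  calc (s ^ 2 - 1) ^ 2 = (s - 1) ^ 2 * (s + 1) ^ 2 := by ring
    _ ≤ (s - 1) ^ 2 * (2 * (1 + T)) := by gcongr

end LogDefect

section Lagrangian

variable {n m : ℕ} {u : Fin n → Fin m → ℝ} {w : Fin n → ℝ}

/-- The linear map sending an allocation `x` to the utilities `(∑ⱼ uᵢⱼ xᵢⱼ)ᵢ` of the consumers. -/
def utility (u : Fin n → Fin m → ℝ) : (Fin n → Fin m → ℝ) →ₗ[ℝ] (Fin n → ℝ) where
  toFun x i := ∑ j, u i j * x i j
  map_add' x y := funext fun i => dotProduct_add (u i) (x i) (y i)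
  map_smul' c x := funext fun i => dotProduct_smul c (u i) (x i)

/-- The linear map sending an allocation `x` to the total demand `(∑ᵢ xᵢⱼ)ⱼ` for the goods. -/
def demand : (Fin n → Fin m → ℝ) →ₗ[ℝ] (Fin m → ℝ) where
  toFun x j := ∑ i, x i j
  map_add' _ _ := funext fun _ => Finset.sum_add_distrib
  map_smul' _ _ := funext fun _ => (Finset.mul_sum _ _ _).symm

/-- The partial derivatives `∂ℒ/∂xᵢⱼ = pⱼ - wᵢ uᵢⱼ / ∑ₖ uᵢₖ xᵢₖ` of the Lagrangian at `(x, p)`. -/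
def lagrGrad (u : Fin n → Fin m → ℝ) (w : Fin n → ℝ) (x : Fin n → Fin m → ℝ) (p : Fin m → ℝ) :
    Fin n → Fin m → ℝ :=
  fun i j => p j - w i * u i j / utility u x i

theorem utility_apply (x : Fin n → Fin m → ℝ) (i : Fin n) :
    utility u x i = ∑ j, u i j * x i j :=
  rfl

theorem demand_apply (x : Fin n → Fin m → ℝ) (j : Fin m) : demand x j = ∑ i, x i j :=
  rfl

theorem mem_ZSet_iff {z : FisherPair n m} :
    z ∈ ZSet n m u ↔ (∀ i j, 0 ≤ z.1 i j) ∧ ∀ i, 0 < utility u z.1 i :=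
  Iff.rfl

theorem lagr_eq (x : Fin n → Fin m → ℝ) (p : Fin m → ℝ) :
    Lagr n m u w x p
      = ∑ i, -(w i) * Real.log (utility u x i) + ∑ j, p j * (demand x j - 1) :=
  rfl

theorem sum_sum_mul_eq_sum_mul_demand (x : Fin n → Fin m → ℝ) (p : Fin m → ℝ) :
    ∑ i, ∑ j, x i j * p j = ∑ j, p j * demand x j := by
  rw [Finset.sum_comm]
  simp only [demand_apply, Finset.mul_sum, mul_comm]

theorem sum_sum_mul_lagrGrad (x d : Fin n → Fin m → ℝ) (p : Fin m → ℝ) :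
    ∑ i, ∑ j, d i j * lagrGrad u w x p i j
      = ∑ j, p j * demand d j - ∑ i, w i * (utility u d i / utility u x i) := by
  rw [← sum_sum_mul_eq_sum_mul_demand, ← Finset.sum_sub_distrib]
  refine Finset.sum_congr rfl fun i _ => ?_
  rw [utility_apply d, Finset.sum_div, Finset.mul_sum, ← Finset.sum_sub_distrib]
  refine Finset.sum_congr rfl fun j _ => ?_
  rw [lagrGrad]
  ring

theorem lagr_eq_add_lagrGrad_add_logDefect {x y : Fin n → Fin m → ℝ}
    (hx : ∀ i, 0 < utility u x i) (hy : ∀ i, 0 < utility u y i) (p : Fin m → ℝ) :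
    Lagr n m u w y p = Lagr n m u w x p + ∑ i, ∑ j, (y - x) i j * lagrGrad u w x p i j
      + ∑ i, w i * logDefect (utility u y i / utility u x i) := by
  have hlog : ∀ i, -(w i) * Real.log (utility u y i)
      = -(w i) * Real.log (utility u x i) - w i * (utility u (y - x) i / utility u x i)
        + w i * logDefect (utility u y i / utility u x i) := fun i => by
    rw [map_sub, Pi.sub_apply, sub_div, div_self (hx i).ne', logDefect,
      Real.log_div (hy i).ne' (hx i).ne']
    ring
  have hmarket : ∑ j, p j * (demand y j - 1)
      = ∑ j, p j * (demand x j - 1) + ∑ j, p j * demand (y - x) j := by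
    rw [← Finset.sum_add_distrib]
    exact Finset.sum_congr rfl fun j _ => by rw [map_sub, Pi.sub_apply]; ring
  simp only [lagr_eq, sum_sum_mul_lagrGrad, hmarket, hlog, Finset.sum_add_distrib,
    Finset.sum_sub_distrib]
  ring

theorem lagr_add_lagrGrad_le (hw : ∀ i, 0 ≤ w i) {x y : Fin n → Fin m → ℝ}
    (hx : ∀ i, 0 < utility u x i) (hy : ∀ i, 0 < utility u y i) (p : Fin m → ℝ) :
    Lagr n m u w x p + ∑ i, ∑ j, (y - x) i j * lagrGrad u w x p i j ≤ Lagr n m u w y p := by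
  rw [lagr_eq_add_lagrGrad_add_logDefect hx hy, le_add_iff_nonneg_right]
  exact Finset.sum_nonneg fun i _ =>
    mul_nonneg (hw i) (logDefect_nonneg (div_pos (hy i) (hx i)))

theorem utility_add_pos {x d : Fin n → Fin m → ℝ} {i : Fin n} (hx : 0 < utility u x i)
    (hd : -(1 / 2) ≤ utility u d i / utility u x i) : 0 < utility u (x + d) i := by
  rw [le_div_iff₀ hx] at hd
  rw [map_add, Pi.add_apply]
  linarith

theorem lagr_add_le (hw : ∀ i, 0 ≤ w i) {x d : Fin n → Fin m → ℝ}
    (hx : ∀ i, 0 < utility u x i) (hd : ∀ i, -(1 / 2) ≤ utility u d i / utility u x i)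
    (p : Fin m → ℝ) :
    Lagr n m u w (x + d) p ≤ Lagr n m u w x p + ∑ i, ∑ j, d i j * lagrGrad u w x p i j
      + ∑ i, w i * (2 * (utility u d i / utility u x i) ^ 2) := by
  rw [lagr_eq_add_lagrGrad_add_logDefect hx fun i => utility_add_pos (hx i) (hd i),
    add_sub_cancel_left]
  gcongr with i
  · exact hw i
  · rw [map_add, Pi.add_apply, add_div, div_self (hx i).ne']
    exact logDefect_one_add_le (hd i)

theorem lagr_price_add (x : Fin n → Fin m → ℝ) (p q : Fin m → ℝ) :
    Lagr n m u w x (p + q) = Lagr n m u w x p + ∑ j, q j * (demand x j - 1) := by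
  simp only [lagr_eq, Pi.add_apply, add_mul, Finset.sum_add_distrib, add_assoc]

theorem lagr_of_demand_eq_one {x : Fin n → Fin m → ℝ} (hx : demand x = 1) (p : Fin m → ℝ) :
    Lagr n m u w x p = ∑ i, -(w i) * Real.log (utility u x i) := by
  simp [lagr_eq, hx]

end Lagrangian

section SaddlePoint

open scoped Topology

variable {n m : ℕ} {u : Fin n → Fin m → ℝ} {w : Fin n → ℝ} {z₀ zs : FisherPair n m}

/-- `ℒ(x⋆, ·)` is affine and bounded above, hence constant. -/
theorem demand_eq_one_of_mem_ZstarSet (hs : zs ∈ ZstarSet n m u w) : demand zs.1 = 1 := by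
  have hmax := hs.2.1 (zs.2 + (demand zs.1 - 1))
  rw [lagr_price_add, add_le_iff_nonpos_right] at hmax
  have hnonneg : ∀ j, 0 ≤ (demand zs.1 - 1) j * (demand zs.1 - 1) j := fun j => mul_self_nonneg _
  have hsq := (Fintype.sum_eq_zero_iff_of_nonneg hnonneg).1
    (hmax.antisymm (Fintype.sum_nonneg hnonneg))
  exact funext fun j => sub_eq_zero.1 (mul_self_eq_zero.1 (congrFun hsq j))

theorem sum_sum_mul_lagrGrad_nonneg_of_mem_ZstarSet (hw : ∀ i, 0 ≤ w i)
    (hs : zs ∈ ZstarSet n m u w) {d : Fin n → Fin m → ℝ} (hd : ∀ i j, 0 ≤ zs.1 i j + d i j) :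
    0 ≤ ∑ i, ∑ j, d i j * lagrGrad u w zs.1 zs.2 i j := by
  obtain ⟨hx, hU⟩ := mem_ZSet_iff.1 hs.1
  set r : Fin n → ℝ := fun i => utility u d i / utility u zs.1 i
  set A := ∑ i, ∑ j, d i j * lagrGrad u w zs.1 zs.2 i j
  set K := ∑ i, w i * (2 * r i ^ 2)
  have hsmall : ∀ᶠ ε : ℝ in 𝓝[>] 0, ∀ i, -(1 / 2) ≤ ε * r i :=
    Filter.eventually_all.2 fun i => nhdsWithin_le_nhds <|
      (Continuous.tendsto' (by fun_prop) 0 0 (zero_mul (r i))).eventually_const_le (by norm_num)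
  have hexpansion : ∀ᶠ ε : ℝ in 𝓝[>] 0, 0 ≤ A + ε * K := by
    filter_upwards [hsmall, Ioc_mem_nhdsGT one_pos] with ε hε_small ⟨hε_pos, hε_le⟩
    have hratio : ∀ i, utility u (ε • d) i / utility u zs.1 i = ε * r i := fun i => by
      rw [map_smul, Pi.smul_apply, smul_eq_mul, mul_div_assoc]
    have hratio_ge : ∀ i, -(1 / 2) ≤ utility u (ε • d) i / utility u zs.1 i := fun i =>
      (hε_small i).trans_eq (hratio i).symm
    have hfeasible : ∀ i j, 0 ≤ zs.1 i j + ε * d i j := fun i j => by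
      linarith [mul_nonneg hε_pos.le (hd i j), mul_nonneg (sub_nonneg.2 hε_le) (hx i j)]
    have hle := (hs.2.2 _ hfeasible fun i => utility_add_pos (hU i) (hratio_ge i)).trans
      (lagr_add_le hw hU hratio_ge zs.2)
    have hlin : ∑ i, ∑ j, (ε • d) i j * lagrGrad u w zs.1 zs.2 i j = ε * A := by
      simp only [A, Finset.mul_sum, Pi.smul_apply, smul_eq_mul, mul_assoc]
    have hquad : ∑ i, w i * (2 * (utility u (ε • d) i / utility u zs.1 i) ^ 2) = ε ^ 2 * K := by
      simp only [K, hratio, Finset.mul_sum]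
      exact Finset.sum_congr rfl fun i _ => by ring
    rw [hlin, hquad] at hle
    exact nonneg_of_mul_nonneg_right (by linarith : 0 ≤ ε * (A + ε * K)) hε_pos
  have hlim : Filter.Tendsto (fun ε : ℝ => A + ε * K) (𝓝[>] 0) (𝓝 A) :=
    (Continuous.tendsto' (by fun_prop) _ _ (by simp)).mono_left nhdsWithin_le_nhds
  exact ge_of_tendsto hlim hexpansion

/-- Complementary slackness, summed over the consumers: the allocation of good `j` can be rescaled
in both directions. -/
theorem sum_mul_lagrGrad_eq_zero_of_mem_ZstarSet (hw : ∀ i, 0 ≤ w i)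
    (hs : zs ∈ ZstarSet n m u w) (j : Fin m) :
    ∑ i, zs.1 i j * lagrGrad u w zs.1 zs.2 i j = 0 := by
  have hscale : ∀ t : ℝ, -1 ≤ t → 0 ≤ t * ∑ i, zs.1 i j * lagrGrad u w zs.1 zs.2 i j := by
    intro t ht
    have hvi := sum_sum_mul_lagrGrad_nonneg_of_mem_ZstarSet hw hs
      (d := fun i k => if k = j then t * zs.1 i k else 0) fun i k => by
        have := hs.1.1 i k
        split_ifs
        · linarith [mul_nonneg (neg_le_iff_add_nonneg.1 ht) this]
        · simpa using this
    simpa [ite_mul, mul_assoc, ← Finset.mul_sum] using hvi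
  linarith [hscale 1 (by norm_num), hscale (-1) le_rfl]

theorem sum_mul_logDefect_le_lagr_sub_lagr (hw : ∀ i, 0 ≤ w i) (hs : zs ∈ ZstarSet n m u w)
    {x : Fin n → Fin m → ℝ} (hx : ∀ i j, 0 ≤ x i j) (hU : ∀ i, 0 < utility u x i) :
    ∑ i, w i * logDefect (utility u x i / utility u zs.1 i)
      ≤ Lagr n m u w x zs.2 - Lagr n m u w zs.1 zs.2 := by
  have hvi := sum_sum_mul_lagrGrad_nonneg_of_mem_ZstarSet hw hs (d := x - zs.1)
    fun i j => by simpa using hx i j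
  rw [lagr_eq_add_lagrGrad_add_logDefect (mem_ZSet_iff.1 hs.1).2 hU]
  linarith

theorem lagr_price_eq_of_mem_ZstarSet (hs : zs ∈ ZstarSet n m u w) (p : Fin m → ℝ) :
    Lagr n m u w zs.1 p = Lagr n m u w zs.1 zs.2 := by
  have hdemand := demand_eq_one_of_mem_ZstarSet hs
  rw [lagr_of_demand_eq_one hdemand, lagr_of_demand_eq_one hdemand]

theorem utility_eq_of_mem_ZstarSet (hw : ∀ i, 0 < w i) (h₀ : z₀ ∈ ZstarSet n m u w)
    (hs : zs ∈ ZstarSet n m u w) : utility u zs.1 = utility u z₀.1 := by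
  obtain ⟨hx₀, hU₀⟩ := mem_ZSet_iff.1 h₀.1
  obtain ⟨hx, hU⟩ := mem_ZSet_iff.1 hs.1
  have hratio : ∀ i, 0 < utility u zs.1 i / utility u z₀.1 i := fun i => div_pos (hU i) (hU₀ i)
  have hterm : ∀ i, 0 ≤ w i * logDefect (utility u zs.1 i / utility u z₀.1 i) :=
    fun i => mul_nonneg (hw i).le (logDefect_nonneg (hratio i))
  have hlagr : Lagr n m u w zs.1 z₀.2 ≤ Lagr n m u w z₀.1 z₀.2 :=
    calc Lagr n m u w zs.1 z₀.2 = Lagr n m u w zs.1 zs.2 := lagr_price_eq_of_mem_ZstarSet hs _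
      _ ≤ Lagr n m u w z₀.1 zs.2 := hs.2.2 z₀.1 hx₀ hU₀
      _ = Lagr n m u w z₀.1 z₀.2 := lagr_price_eq_of_mem_ZstarSet h₀ _
  have hsum := sum_mul_logDefect_le_lagr_sub_lagr (fun i => (hw i).le) h₀ hx hU
  have hzero := (Fintype.sum_eq_zero_iff_of_nonneg hterm).1
    ((hsum.trans (sub_nonpos.2 hlagr)).antisymm (Fintype.sum_nonneg hterm))
  refine funext fun i => (div_eq_one_iff_eq (hU₀ i).ne').1 ?_
  exact (logDefect_eq_zero_iff (hratio i)).1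
    ((mul_eq_zero.1 (congrFun hzero i)).resolve_left (hw i).ne')

theorem mk_mem_ZstarSet (h₀ : z₀ ∈ ZstarSet n m u w) {x : Fin n → Fin m → ℝ}
    (hx : ∀ i j, 0 ≤ x i j) (hdemand : demand x = 1) (hU : utility u x = utility u z₀.1) :
    (x, z₀.2) ∈ ZstarSet n m u w := by
  have hlagr : ∀ p, Lagr n m u w x p = Lagr n m u w z₀.1 z₀.2 := fun p => by
    rw [lagr_of_demand_eq_one hdemand, hU,
      lagr_of_demand_eq_one (demand_eq_one_of_mem_ZstarSet h₀)]
  refine ⟨⟨hx, fun i => ?_⟩, fun p => ?_, fun y hy hyU => ?_⟩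
  · exact ((mem_ZSet_iff.1 h₀.1).2 i).trans_eq (congrFun hU i).symm
  · rw [hlagr, hlagr]
  · exact (hlagr _).trans_le (h₀.2.2 y hy hyU)

theorem price_eq_of_mem_ZstarSet (hw : ∀ i, 0 < w i) (h₀ : z₀ ∈ ZstarSet n m u w)
    (hs : zs ∈ ZstarSet n m u w) : zs.2 = z₀.2 := by
  have hdemand := demand_eq_one_of_mem_ZstarSet hs
  have hmix : (zs.1, z₀.2) ∈ ZstarSet n m u w :=
    mk_mem_ZstarSet h₀ hs.1.1 hdemand (utility_eq_of_mem_ZstarSet hw h₀ hs)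
  funext j
  have hdiff : ∑ i, (zs.1 i j * lagrGrad u w zs.1 zs.2 i j
      - zs.1 i j * lagrGrad u w zs.1 z₀.2 i j) = 0 := by
    rw [Finset.sum_sub_distrib, sum_mul_lagrGrad_eq_zero_of_mem_ZstarSet (fun i => (hw i).le) hs,
      sum_mul_lagrGrad_eq_zero_of_mem_ZstarSet (fun i => (hw i).le) hmix, sub_zero]
  simp only [lagrGrad, ← mul_sub, sub_sub_sub_cancel_right, ← Finset.sum_mul, ← demand_apply,
    hdemand, Pi.one_apply, one_mul] at hdiff
  exact sub_eq_zero.1 hdiff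

end SaddlePoint

section Distance

variable {n m : ℕ} {u : Fin n → Fin m → ℝ} {w : Fin n → ℝ}

theorem pairDistSq_le {z z' : FisherPair n m} {S : Set (FisherPair n m)} (hz' : z' ∈ S) :
    pairDistSq n m z S ≤ pairNormSq n m (z - z') := by
  refine csInf_le ⟨0, ?_⟩ ⟨z', hz', rfl⟩
  rintro _ ⟨z'', -, rfl⟩
  unfold pairNormSq
  positivity

theorem exists_mem_ZstarSet_sum_sum_sq_sub_le (u : Fin n → Fin m → ℝ) (w : Fin n → ℝ) :
    ∃ C : ℝ, 0 ≤ C ∧ ∀ zs ∈ ZstarSet n m u w, ∀ x : Fin n → Fin m → ℝ, (∀ i j, 0 ≤ x i j) →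
      ∃ x', (x', zs.2) ∈ ZstarSet n m u w ∧ ∑ i, ∑ j, (x i j - x' i j) ^ 2
        ≤ C * (∑ i, (utility u x i - utility u zs.1 i) ^ 2 + ∑ j, (demand x j - 1) ^ 2) := by
  obtain ⟨C, hHoffman⟩ := exists_nonneg_map_eq_norm_sub_le
    ((utility u).prod demand ∘ₗ (LinearEquiv.curry ℝ ℝ (Fin n) (Fin m)).toLinearMap)
  refine ⟨Fintype.card (Fin n × Fin m) * C ^ 2, by positivity, fun zs hs x hx => ?_⟩
  obtain ⟨y, hy, hMy, hdist⟩ := hHoffman (Function.uncurry x) (Function.uncurry zs.1)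
    (fun k => hx k.1 k.2) (fun k => hs.1.1 k.1 k.2)
  have hdemand := demand_eq_one_of_mem_ZstarSet hs
  have hMy' : (utility u (Function.curry y), demand (Function.curry y))
      = (utility u zs.1, demand zs.1) := hMy
  obtain ⟨hU, hD⟩ := Prod.ext_iff.1 hMy'
  refine ⟨Function.curry y, mk_mem_ZstarSet hs (fun i j => hy (i, j)) (hD.trans hdemand) hU, ?_⟩
  have hresidual : ‖(utility u zs.1 - utility u x, demand zs.1 - demand x)‖ ^ 2
      ≤ ∑ i, (utility u x i - utility u zs.1 i) ^ 2 + ∑ j, (demand x j - 1) ^ 2 := by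
    simpa only [Pi.sub_apply, sub_sq_comm (utility u zs.1 _), hdemand, Pi.one_apply,
      sub_sq_comm (1 : ℝ)] using
        norm_prodMk_sq_le (utility u zs.1 - utility u x) (demand zs.1 - demand x)
  calc ∑ i, ∑ j, (x i j - y (i, j)) ^ 2
      = ∑ k, (y - Function.uncurry x) k ^ 2 := by
        rw [Fintype.sum_prod_type]
        exact Finset.sum_congr rfl fun i _ => Finset.sum_congr rfl fun j _ => sub_sq_comm _ _
    _ ≤ Fintype.card (Fin n × Fin m) * ‖y - Function.uncurry x‖ ^ 2 :=
        sum_sq_le_card_mul_norm_sq _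
    _ ≤ Fintype.card (Fin n × Fin m)
          * (C * ‖(utility u zs.1 - utility u x, demand zs.1 - demand x)‖) ^ 2 := by
        gcongr
        exact hdist
    _ = Fintype.card (Fin n × Fin m) * C ^ 2
          * ‖(utility u zs.1 - utility u x, demand zs.1 - demand x)‖ ^ 2 := by ring
    _ ≤ _ := by gcongr

theorem exists_pairDistSq_ZstarSet_le (u : Fin n → Fin m → ℝ) (w : Fin n → ℝ) :
    ∃ C : ℝ, 0 ≤ C ∧ ∀ z ∈ ZSet n m u, ∀ zs ∈ ZstarSet n m u w,
      pairDistSq n m z (ZstarSet n m u w)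
        ≤ C * (∑ i, (utility u z.1 i - utility u zs.1 i) ^ 2 + ∑ j, (demand z.1 j - 1) ^ 2)
          + ∑ j, (z.2 j - zs.2 j) ^ 2 := by
  obtain ⟨C, hC, hle⟩ := exists_mem_ZstarSet_sum_sum_sq_sub_le u w
  refine ⟨C, hC, fun z hz zs hs => ?_⟩
  obtain ⟨x', hx', hdist⟩ := hle zs hs z.1 hz.1
  exact (pairDistSq_le hx').trans (add_le_add_left hdist _)

end Distance

section Growth

open scoped Topology

variable {n m : ℕ} {u : Fin n → Fin m → ℝ} {w : Fin n → ℝ} {z₀ zs : FisherPair n m}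

theorem exists_utility_growth (hw : ∀ i, 0 < w i) (h₀ : z₀ ∈ ZstarSet n m u w) {T : ℝ}
    (hT : 0 ≤ T) :
    ∃ c : ℝ, 0 < c ∧ ∀ zs ∈ ZstarSet n m u w, ∀ z ∈ ZSet n m u,
      (∀ i, utility u z.1 i / utility u z₀.1 i ≤ T) →
      c * ∑ i, (utility u z.1 i - utility u zs.1 i) ^ 2
        ≤ Lagr n m u w z.1 zs.2 - Lagr n m u w zs.1 zs.2 := by
  have hU₀ := (mem_ZSet_iff.1 h₀.1).2
  obtain ⟨c, hc, hlt⟩ := Pi.exists_forall_pos_add_lt (x := 0)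
    (y := fun i => w i / (2 * (1 + T) * utility u z₀.1 i ^ 2)) fun i => by
      have := hw i
      have := hU₀ i
      simp only [Pi.zero_apply]
      positivity
  refine ⟨c, hc, fun zs hs z hz hle => ?_⟩
  rw [utility_eq_of_mem_ZstarSet hw h₀ hs]
  have hgrowth := sum_mul_logDefect_le_lagr_sub_lagr (fun i => (hw i).le) hs hz.1 hz.2
  rw [utility_eq_of_mem_ZstarSet hw h₀ hs] at hgrowth
  refine le_trans ?_ hgrowth
  rw [Finset.mul_sum]
  refine Finset.sum_le_sum fun i _ => ?_
  have hc_le : c ≤ w i / (2 * (1 + T) * utility u z₀.1 i ^ 2) := by simpa using (hlt i).le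
  calc c * (utility u z.1 i - utility u z₀.1 i) ^ 2
      ≤ w i / (2 * (1 + T) * utility u z₀.1 i ^ 2)
          * (utility u z.1 i - utility u z₀.1 i) ^ 2 := by gcongr
    _ = w i * ((utility u z.1 i / utility u z₀.1 i - 1) ^ 2 / (2 * (1 + T))) := by
        have := (hU₀ i).ne'
        field_simp
    _ ≤ w i * logDefect (utility u z.1 i / utility u z₀.1 i) := by
        gcongr
        · exact (hw i).le
        · exact sq_sub_one_div_le_logDefect (div_pos (hz.2 i) (hU₀ i)) (hle i)

theorem sum_sum_mul_sq_le_sum_sq {x : Fin n → Fin m → ℝ} (hx : ∀ i j, 0 ≤ x i j)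
    (hdemand : demand x = 1) (c : Fin m → ℝ) : ∑ i, ∑ j, (c j * x i j) ^ 2 ≤ ∑ j, c j ^ 2 := by
  have hle : ∀ i j, x i j ≤ 1 := fun i j =>
    (Finset.single_le_sum (fun k _ => hx k j) (Finset.mem_univ i)).trans_eq (congrFun hdemand j)
  rw [Finset.sum_comm]
  refine Finset.sum_le_sum fun j _ => ?_
  calc ∑ i, (c j * x i j) ^ 2 ≤ ∑ i, c j ^ 2 * x i j := Finset.sum_le_sum fun i _ => by
        rw [mul_pow]
        gcongr
        exact pow_le_of_le_one (hx i j) (hle i j) two_ne_zero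
    _ = c j ^ 2 * demand x j := (Finset.mul_sum _ _ _).symm
    _ = c j ^ 2 := by rw [hdemand, Pi.one_apply, mul_one]

/-- A bound, at utilities `U`, for the sum over the consumers of the squared relative changes of
utility caused by a change of the allocation of unit Euclidean length. -/
def utilitySensitivity (u : Fin n → Fin m → ℝ) (U : Fin n → ℝ) : ℝ :=
  ∑ i, (∑ j, u i j ^ 2) / U i ^ 2

theorem utilitySensitivity_nonneg (u : Fin n → Fin m → ℝ) (U : Fin n → ℝ) :
    0 ≤ utilitySensitivity u U := by
  unfold utilitySensitivity
  positivity

theorem utility_div_sq_le (d : Fin n → Fin m → ℝ) (U : Fin n → ℝ) (i : Fin n) :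
    (utility u d i / U i) ^ 2 ≤ utilitySensitivity u U * ∑ i, ∑ j, d i j ^ 2 := by
  calc (utility u d i / U i) ^ 2 ≤ (∑ j, u i j ^ 2) * (∑ j, d i j ^ 2) / U i ^ 2 := by
        rw [div_pow]
        gcongr
        exact Finset.sum_mul_sq_le_sq_mul_sq Finset.univ (u i) (d i)
    _ = (∑ j, u i j ^ 2) / U i ^ 2 * ∑ j, d i j ^ 2 := by ring
    _ ≤ utilitySensitivity u U * ∑ i, ∑ j, d i j ^ 2 := by
        gcongr
        · exact utilitySensitivity_nonneg u U
        · exact Finset.single_le_sum (f := fun i => (∑ j, u i j ^ 2) / U i ^ 2)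
            (fun _ _ => by positivity) (Finset.mem_univ i)
        · exact Finset.single_le_sum (f := fun i => ∑ j, d i j ^ 2)
            (fun _ _ => by positivity) (Finset.mem_univ i)

theorem sum_sum_mul_lagrGrad_of_mem_ZstarSet (hw : ∀ i, 0 ≤ w i) (hs : zs ∈ ZstarSet n m u w)
    (c p : Fin m → ℝ) :
    ∑ i, ∑ j, c j * zs.1 i j * lagrGrad u w zs.1 p i j = ∑ j, c j * (p j - zs.2 j) := by
  rw [Finset.sum_comm]
  refine Finset.sum_congr rfl fun j _ => ?_
  have hsplit : ∀ i, c j * zs.1 i j * lagrGrad u w zs.1 p i j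
      = c j * (zs.1 i j * lagrGrad u w zs.1 zs.2 i j) + c j * (p j - zs.2 j) * zs.1 i j :=
    fun i => by simp only [lagrGrad]; ring
  simp only [hsplit, Finset.sum_add_distrib, ← Finset.mul_sum, ← demand_apply,
    sum_mul_lagrGrad_eq_zero_of_mem_ZstarSet hw hs, demand_eq_one_of_mem_ZstarSet hs,
    Pi.one_apply, mul_zero, mul_one, zero_add]

theorem lagr_add_mul_le_of_mem_ZstarSet (hw : ∀ i, 0 ≤ w i) (hs : zs ∈ ZstarSet n m u w)
    {c : Fin m → ℝ} (hc : utilitySensitivity u (utility u zs.1) * ∑ j, c j ^ 2 ≤ 1 / 4)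
    (p : Fin m → ℝ) :
    (∀ i, 0 < utility u (zs.1 + fun i j => c j * zs.1 i j) i) ∧
      Lagr n m u w (zs.1 + fun i j => c j * zs.1 i j) p
        ≤ Lagr n m u w zs.1 zs.2 + ∑ j, c j * (p j - zs.2 j)
          + 2 * (∑ i, w i) * (utilitySensitivity u (utility u zs.1) * ∑ j, c j ^ 2) := by
  obtain ⟨hx, hU⟩ := mem_ZSet_iff.1 hs.1
  set d : Fin n → Fin m → ℝ := fun i j => c j * zs.1 i j
  set η := utilitySensitivity u (utility u zs.1) * ∑ j, c j ^ 2
  have hratio_sq : ∀ i, (utility u d i / utility u zs.1 i) ^ 2 ≤ η := fun i =>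
    (utility_div_sq_le d _ i).trans <| mul_le_mul_of_nonneg_left
      (sum_sum_mul_sq_le_sum_sq hx (demand_eq_one_of_mem_ZstarSet hs) c)
      (utilitySensitivity_nonneg _ _)
  have hratio : ∀ i, -(1 / 2) ≤ utility u d i / utility u zs.1 i := fun i =>
    (abs_le_of_sq_le_sq' (((hratio_sq i).trans hc).trans_eq (by norm_num))
      (by norm_num : (0 : ℝ) ≤ 1 / 2)).1
  refine ⟨fun i => utility_add_pos (hU i) (hratio i), (lagr_add_le hw hU hratio p).trans ?_⟩
  rw [lagr_price_eq_of_mem_ZstarSet hs, sum_sum_mul_lagrGrad_of_mem_ZstarSet hw hs]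
  gcongr
  rw [Finset.mul_sum, Finset.sum_mul]
  refine Finset.sum_le_sum fun i _ => ?_
  linarith [mul_le_mul_of_nonneg_left (hratio_sq i) (hw i)]

theorem exists_price_response (hw : ∀ i, 0 ≤ w i) (hs : zs ∈ ZstarSet n m u w) {p : Fin m → ℝ}
    {ξ ε D K : ℝ} (hD : ∑ j, (p j - zs.2 j) ^ 2 = D)
    (hK : utilitySensitivity u (utility u zs.1) = K) (hξ : 0 ≤ ξ) (hε : 0 ≤ ε)
    (hεD : ε ^ 2 * D ≤ 1) (hεK : K * (ε ^ 2 * D) ≤ 1 / 4)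
    (hεξ : ε * (2 * (∑ i, w i) * K + ξ / 2) ≤ 1 / 2) :
    ∃ x, (∀ i j, 0 ≤ x i j) ∧ (∀ i, 0 < utility u x i) ∧
      ε / 2 * D ≤ Lagr n m u w zs.1 zs.2 - Lagr n m u w x p
        - ξ / 2 * ∑ i, ∑ j, (x i j - zs.1 i j) ^ 2 := by
  set c : Fin m → ℝ := fun j => ε * (zs.2 j - p j)
  have hc_sq : ∑ j, c j ^ 2 = ε ^ 2 * D := by
    simp only [c, ← hD, Finset.mul_sum]
    exact Finset.sum_congr rfl fun j _ => by ring
  have hc_lin : ∑ j, c j * (p j - zs.2 j) = -(ε * D) := by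
    simp only [c, ← hD, Finset.mul_sum, ← Finset.sum_neg_distrib]
    exact Finset.sum_congr rfl fun j _ => by ring
  have hc_ge : ∀ j, -1 ≤ c j := fun j =>
    (abs_le_of_sq_le_sq' (((Finset.single_le_sum (fun k _ => sq_nonneg (c k))
      (Finset.mem_univ j)).trans (hc_sq.trans_le hεD)).trans_eq (one_pow 2).symm) zero_le_one).1
  obtain ⟨hpos, hlagr⟩ := lagr_add_mul_le_of_mem_ZstarSet hw hs (c := c) (by rwa [hK, hc_sq]) p
  rw [hK, hc_sq, hc_lin] at hlagr
  refine ⟨_, fun i j => ?_, hpos, ?_⟩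
  · have := mul_nonneg (neg_le_iff_add_nonneg.1 (hc_ge j)) (hs.1.1 i j)
    simp only [Pi.add_apply]
    linarith
  · have hprox : ξ / 2 * ∑ i, ∑ j, (c j * zs.1 i j) ^ 2 ≤ ξ / 2 * (ε ^ 2 * D) := by
      rw [← hc_sq]
      gcongr
      exact sum_sum_mul_sq_le_sum_sq hs.1.1 (demand_eq_one_of_mem_ZstarSet hs) c
    have hD_nonneg : 0 ≤ D := hD ▸ Finset.sum_nonneg fun j _ => sq_nonneg _
    have hstep : ε * (2 * (∑ i, w i) * K + ξ / 2) * (ε * D) ≤ 1 / 2 * (ε * D) := by gcongr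
    simp only [Pi.add_apply, add_sub_cancel_left]
    linarith

theorem exists_price_growth (hw : ∀ i, 0 < w i) (h₀ : z₀ ∈ ZstarSet n m u w) {ξ : ℝ}
    (hξ : 0 ≤ ξ) (B : ℝ) :
    ∃ c : ℝ, 0 < c ∧ ∀ zs ∈ ZstarSet n m u w, ∀ p : Fin m → ℝ,
      ∑ j, (p j - zs.2 j) ^ 2 ≤ B →
      ∃ x, (∀ i j, 0 ≤ x i j) ∧ (∀ i, 0 < utility u x i) ∧
        c * ∑ j, (p j - zs.2 j) ^ 2 ≤ Lagr n m u w zs.1 zs.2 - Lagr n m u w x p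
          - ξ / 2 * ∑ i, ∑ j, (x i j - zs.1 i j) ^ 2 := by
  set K := utilitySensitivity u (utility u z₀.1)
  have hK : 0 ≤ K := utilitySensitivity_nonneg _ _
  have hsmall : ∀ {f : ℝ → ℝ} {b : ℝ}, Continuous f → f 0 < b →
      ∀ᶠ ε in 𝓝[>] 0, f ε ≤ b := fun hf hb =>
    nhdsWithin_le_nhds ((hf.tendsto 0).eventually_le_const hb)
  have hεB := hsmall (f := fun ε => ε ^ 2 * B) (b := 1) (by fun_prop) (by simp)
  have hεK := hsmall (f := fun ε => K * (ε ^ 2 * B)) (b := 1 / 4) (by fun_prop) (by simp)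
  have hεξ := hsmall (f := fun ε => ε * (2 * (∑ i, w i) * K + ξ / 2)) (b := 1 / 2)
    (by fun_prop) (by simp)
  obtain ⟨ε, hB, hKB, hξK, hε : 0 < ε⟩ :=
    (hεB.and (hεK.and (hεξ.and self_mem_nhdsWithin))).exists
  refine ⟨ε / 2, by positivity, fun zs hs p hp => ?_⟩
  have hK_eq : utilitySensitivity u (utility u zs.1) = K := by
    rw [utility_eq_of_mem_ZstarSet hw h₀ hs]
  have hle : ε ^ 2 * ∑ j, (p j - zs.2 j) ^ 2 ≤ ε ^ 2 * B := by gcongr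
  exact exists_price_response (fun i => (hw i).le) hs rfl hK_eq hξ hε.le (hle.trans hB)
    ((mul_le_mul_of_nonneg_left hle hK).trans hKB) hξK

end Growth

section SmoothedGap

variable {n m : ℕ} {u : Fin n → Fin m → ℝ} {w : Fin n → ℝ} {z zh zs : FisherPair n m} {ξ : ℝ}

theorem mul_sub_mul_sq_le_sq_div (hξ : 0 < ξ) (a q : ℝ) :
    q * a - ξ / 2 * q ^ 2 ≤ a ^ 2 / (2 * ξ) := by
  rw [le_div_iff₀ (by positivity)]
  linarith [sq_nonneg (a - ξ * q)]

/-- Linearize `ℒ(·, z.2)` at `zs.1` and complete squares. -/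
theorem qgap_sub_mul_pairNormSq_le (hw : ∀ i, 0 ≤ w i) (hξ : 0 < ξ) (z : FisherPair n m)
    (hs : zs ∈ ZSet n m u) (hzh : zh ∈ ZSet n m u) :
    Qgap n m u w z zh - ξ / 2 * pairNormSq n m (zh - zs)
      ≤ Lagr n m u w z.1 zs.2 - Lagr n m u w zs.1 z.2
        + ∑ i, ∑ j, lagrGrad u w zs.1 z.2 i j ^ 2 / (2 * ξ)
        + ∑ j, (demand z.1 j - 1) ^ 2 / (2 * ξ) := by
  have hlin := lagr_add_lagrGrad_le hw hs.2 hzh.2 z.2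
  have hprice : Lagr n m u w z.1 zh.2
      = Lagr n m u w z.1 zs.2 + ∑ j, (zh.2 - zs.2) j * (demand z.1 j - 1) := by
    rw [← lagr_price_add, add_sub_cancel]
  have hsq_alloc : ∑ i, ∑ j, (-(zh.1 - zs.1) i j * lagrGrad u w zs.1 z.2 i j
        - ξ / 2 * (-(zh.1 - zs.1) i j) ^ 2)
      ≤ ∑ i, ∑ j, lagrGrad u w zs.1 z.2 i j ^ 2 / (2 * ξ) :=
    Finset.sum_le_sum fun i _ => Finset.sum_le_sum fun j _ => mul_sub_mul_sq_le_sq_div hξ _ _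
  have hsq_price : ∑ j, ((zh.2 - zs.2) j * (demand z.1 j - 1) - ξ / 2 * (zh.2 - zs.2) j ^ 2)
      ≤ ∑ j, (demand z.1 j - 1) ^ 2 / (2 * ξ) :=
    Finset.sum_le_sum fun j _ => mul_sub_mul_sq_le_sq_div hξ _ _
  simp only [neg_mul, neg_sq, Finset.sum_sub_distrib, Finset.sum_neg_distrib,
    ← Finset.mul_sum] at hsq_alloc hsq_price
  simp only [Qgap, pairNormSq, Prod.fst_sub, Prod.snd_sub, hprice, mul_add]
  linarith

theorem le_smoothedGap (hw : ∀ i, 0 ≤ w i) (hξ : 0 < ξ) (z : FisherPair n m)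
    (hs : zs ∈ ZSet n m u) (hzh : zh ∈ ZSet n m u) :
    Qgap n m u w z zh - ξ / 2 * pairNormSq n m (zh - zs) ≤ smoothedGap n m u w ξ z zs :=
  le_csSup ⟨_, fun _ ⟨_, hzh', hr⟩ => hr.trans_le (qgap_sub_mul_pairNormSq_le hw hξ z hs hzh')⟩
    ⟨zh, hzh, rfl⟩

/-- The price `zs.2 + (demand z.1 - 1) / ξ` maximizes `ℒ(z.1, ·) - ξ / 2 * ‖· - zs.2‖²`. -/
theorem lagr_sub_le_smoothedGap (hw : ∀ i, 0 ≤ w i) (hξ : 0 < ξ) (z : FisherPair n m)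
    (hs : zs ∈ ZSet n m u) {x : Fin n → Fin m → ℝ} (hx : ∀ i j, 0 ≤ x i j)
    (hU : ∀ i, 0 < utility u x i) :
    Lagr n m u w z.1 zs.2 + 1 / (2 * ξ) * ∑ j, (demand z.1 j - 1) ^ 2
        - Lagr n m u w x z.2 - ξ / 2 * ∑ i, ∑ j, (x i j - zs.1 i j) ^ 2
      ≤ smoothedGap n m u w ξ z zs := by
  set b := ∑ j, (demand z.1 j - 1) ^ 2
  set q : Fin m → ℝ := fun j => ξ⁻¹ * (demand z.1 j - 1)
  have hlin : ∑ j, q j * (demand z.1 j - 1) = ξ⁻¹ * b := by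
    simp only [q, b, Finset.mul_sum]
    exact Finset.sum_congr rfl fun j _ => by ring
  have hsq : ∑ j, q j ^ 2 = ξ⁻¹ ^ 2 * b := by
    simp only [q, b, Finset.mul_sum, mul_pow]
  have hle := le_smoothedGap hw hξ z hs (zh := (x, zs.2 + q)) ⟨hx, hU⟩
  simp only [Qgap, pairNormSq, Prod.fst_sub, Prod.snd_sub, Pi.sub_apply, Pi.add_apply,
    add_sub_cancel_left, lagr_price_add, hlin, hsq] at hle
  refine le_trans (le_of_eq ?_) hle
  field_simp
  ring

end SmoothedGap

section QuadraticGrowth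

variable {n m : ℕ} {u : Fin n → Fin m → ℝ} {w : Fin n → ℝ} {z₀ : FisherPair n m}

theorem exists_utility_div_le_of_isBounded (u : Fin n → Fin m → ℝ) (U : Fin n → ℝ)
    {S : Set (FisherPair n m)} (hS : Bornology.IsBounded S) :
    ∃ T : ℝ, 0 ≤ T ∧ ∀ z ∈ S, ∀ i, utility u z.1 i / U i ≤ T := by
  have hcont : Continuous fun z : FisherPair n m => ‖fun i => utility u z.1 i / U i‖ := by
    simp only [utility_apply]
    fun_prop
  obtain ⟨T, hT, hle⟩ := (hS.isCompact_closure.bddAbove_image hcont.continuousOn).exists_ge 0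
  refine ⟨T, hT, fun z hz i => ?_⟩
  calc utility u z.1 i / U i ≤ ‖utility u z.1 i / U i‖ := le_abs_self _
    _ ≤ ‖fun k => utility u z.1 k / U k‖ := norm_le_pi_norm (fun k => utility u z.1 k / U k) i
    _ ≤ T := hle _ (Set.mem_image_of_mem _ (subset_closure hz))

theorem exists_sum_sq_price_sub_le_of_isBounded (p : Fin m → ℝ) {S : Set (FisherPair n m)}
    (hS : Bornology.IsBounded S) : ∃ B : ℝ, ∀ z ∈ S, ∑ j, (z.2 j - p j) ^ 2 ≤ B := by
  have hcont : Continuous fun z : FisherPair n m => ∑ j, (z.2 j - p j) ^ 2 := by fun_prop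
  obtain ⟨B, hB⟩ := hS.isCompact_closure.bddAbove_image hcont.continuousOn
  exact ⟨B, fun z hz => hB (Set.mem_image_of_mem _ (subset_closure hz))⟩

theorem exists_smoothedGap_growth (hw : ∀ i, 0 < w i) (h₀ : z₀ ∈ ZstarSet n m u w) {ξ : ℝ}
    (hξ : 0 < ξ) {S : Set (FisherPair n m)} (hS : Bornology.IsBounded S) :
    ∃ β : ℝ, 0 < β ∧ ∀ z ∈ ZSet n m u ∩ S, ∀ zs ∈ ZstarSet n m u w,
      β * (∑ i, (utility u z.1 i - utility u zs.1 i) ^ 2 + ∑ j, (demand z.1 j - 1) ^ 2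
        + ∑ j, (z.2 j - zs.2 j) ^ 2) ≤ smoothedGap n m u w ξ z zs := by
  obtain ⟨T, hT, hUT⟩ := exists_utility_div_le_of_isBounded u (utility u z₀.1) hS
  obtain ⟨B, hB⟩ := exists_sum_sq_price_sub_le_of_isBounded z₀.2 hS
  obtain ⟨c₁, hc₁, hutility⟩ := exists_utility_growth hw h₀ hT
  obtain ⟨c₂, hc₂, hprice⟩ := exists_price_growth hw h₀ hξ.le B
  refine ⟨min (min c₁ (1 / (2 * ξ))) c₂, by positivity, fun z ⟨hz, hzS⟩ zs hs => ?_⟩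
  obtain ⟨x, hx, hU, hgrowth⟩ := hprice zs hs z.2
    (by simpa only [price_eq_of_mem_ZstarSet hw h₀ hs] using hB z hzS)
  have hgap := lagr_sub_le_smoothedGap (fun i => (hw i).le) hξ z hs.1 hx hU
  have hprimal := hutility zs hs z hz (hUT z hzS)
  rw [mul_add, mul_add]
  calc _ ≤ c₁ * ∑ i, (utility u z.1 i - utility u zs.1 i) ^ 2
        + 1 / (2 * ξ) * ∑ j, (demand z.1 j - 1) ^ 2 + c₂ * ∑ j, (z.2 j - zs.2 j) ^ 2 := by
        gcongr
        · exact (min_le_left _ _).trans (min_le_left _ _)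
        · exact (min_le_left _ _).trans (min_le_right _ _)
        · exact min_le_right _ _
    _ ≤ smoothedGap n m u w ξ z zs := by linarith

theorem smoothed_gap_quadratic_growth_general (hw : ∀ i, 0 < w i)
    (hne : (ZstarSet n m u w).Nonempty) {ξ : ℝ} (hξ : 0 < ξ) {S : Set (FisherPair n m)}
    (hS : Bornology.IsBounded S) :
    ∃ α : ℝ, 0 < α ∧ ∀ z ∈ ZSet n m u ∩ S, ∀ zs ∈ ZstarSet n m u w,
      α * pairDistSq n m z (ZstarSet n m u w) ≤ smoothedGap n m u w ξ z zs := by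
  obtain ⟨z₀, h₀⟩ := hne
  obtain ⟨C, hC, hdist⟩ := exists_pairDistSq_ZstarSet_le u w
  obtain ⟨β, hβ, hgrowth⟩ := exists_smoothedGap_growth hw h₀ hξ hS
  refine ⟨β / (1 + C), by positivity, fun z hz zs hs => le_trans ?_ (hgrowth z hz zs hs)⟩
  rw [div_mul_eq_mul_div, mul_div_assoc]
  gcongr
  rw [div_le_iff₀' (by positivity)]
  refine (hdist z hz.1 zs hs).trans ?_
  set r := ∑ i, (utility u z.1 i - utility u zs.1 i) ^ 2 + ∑ j, (demand z.1 j - 1) ^ 2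
  have hr : 0 ≤ r := by positivity
  have hq : 0 ≤ C * ∑ j, (z.2 j - zs.2 j) ^ 2 := by positivity
  linarith

end QuadraticGrowth

/-- Quadratic growth of the smoothed duality gap: for every `ξ > 0` and every bounded
set `S` there is `α > 0` such that `G_ξ(z; z⋆) ≥ α · dist(z, 𝒵⋆)²` for all `z ∈ 𝒵 ∩ S`
and all saddle points `z⋆ ∈ 𝒵⋆`. -/
theorem smoothed_gap_quadratic_growth (n m : ℕ) (u : Fin n → Fin m → ℝ) (w : Fin n → ℝ)
    (hu : ∀ i j, 0 ≤ u i j)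
    (hrow : ∀ i, ∃ j, 0 < u i j)
    (hcol : ∀ j, ∃ i, 0 < u i j)
    (hw : ∀ i, 0 < w i)
    (hne : (ZstarSet n m u w).Nonempty) :
    ∀ ξ : ℝ, 0 < ξ → ∀ S : Set (FisherPair n m), Bornology.IsBounded S →
      ∃ α : ℝ, 0 < α ∧
        ∀ z ∈ ZSet n m u ∩ S, ∀ zs ∈ ZstarSet n m u w,
          α * pairDistSq n m z (ZstarSet n m u w) ≤ smoothedGap n m u w ξ z zs  :=
  fun _ hξ _ hS => smoothed_gap_quadratic_growth_general hw hne hξ hS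

end
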